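/- Consider a sequence indexed by n of noise-free models Y⁽ⁿ⁾ = X⁽ⁿ⁾β⁽ⁿ⁾ with X⁽ⁿ⁾ an n×p⁽ⁿ⁾ matrix with unit-norm columns and p⁽ⁿ⁾ → ∞, where β⁽ⁿ⁾ has iid coordinates with law (1−ε_n)ν₀ + ε_n π_n, ε_n ∈ (0,1). Let N*_n(C) = max_{1≤i≤p} #{j ≠ i : C_{ij} ≠ 0}. Suppose: (i) there is c₃ > 0 with liminf_n [ −log(ε_n N*_n(C)) / log(p⁽ⁿ⁾) ] ≥ c₃; (ii) there are a_n > 0 and c₄ ≥ 1 such that for sufficiently large n the support of π_n is contained in [−c₄ a_n, −a_n] ∪ [a_n, c₄ a_n]; and (iii) there is δ > 0 with max_{i≠j} |C_{ij}| ≤ δ and δ < c₃/(2 c₄). Then A_n(a_n/2, ε_n, ḡ⁽ⁿ⁾) → 0 as n → ∞, i.e., Condition F'' holds. -/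

import Mathlib

open Matrix MeasureTheory ProbabilityTheory Filter Topology

/-- `g_{ij}(t) = E_{u∼π}[exp(t u ⟨x_i, x_j⟩)] − 1`, where `x_i, x_j` are columns of `X`. -/
noncomputable def gfun {n p : ℕ} (X : Matrix (Fin n) (Fin p) ℝ) (π : Measure ℝ)
    (i j : Fin p) (t : ℝ) : ℝ :=
  (∫ u, Real.exp (t * u * ∑ k, X k i * X k j) ∂π) - 1

/-- `ḡ_i(t) = Σ_{j ≠ i} g_{ij}(t)`. -/
noncomputable def gbar {n p : ℕ} (X : Matrix (Fin n) (Fin p) ℝ) (π : Measure ℝ)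
    (i : Fin p) (t : ℝ) : ℝ :=
  ∑ j ∈ Finset.univ.erase i, gfun X π i j t

/-- `A(δ, ε, ḡ) = inf_{t > 0} e^{−δt} Σ_i [exp(ε ḡ_i(t)) + exp(ε ḡ_i(−t))]`. -/
noncomputable def Afun {n p : ℕ} (X : Matrix (Fin n) (Fin p) ℝ) (π : Measure ℝ)
    (δ ε : ℝ) : ℝ :=
  sInf ((fun t => Real.exp (-(δ * t)) *
    ∑ i, (Real.exp (ε * gbar X π i t) + Real.exp (ε * gbar X π i (-t)))) '' Set.Ioi 0)

/-- `N*_n(C) = max_i #{j ≠ i : C_ij ≠ 0}`, the maximal number of nonzero off-diagonal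
entries in a row of the Gram matrix `C = XᵀX`. -/
noncomputable def Nstar {n p : ℕ} (X : Matrix (Fin n) (Fin p) ℝ) : ℕ :=
  Finset.univ.sup fun i : Fin p =>
    ((Finset.univ.erase i).filter fun j => (Xᵀ * X) i j ≠ 0).card

/-!
Bound the infimum defining `A` by its value at a single, well-chosen `t`. If `|u| ≤ κ b` almost
surely and `|C_ij| ≤ δ`, then each of the at most `N*` nonzero terms of `ḡ_i(± t)` is at most
`exp (t κ b δ)`. At `t = s log p / b` this is `p ^ (s κ δ)`, whereas the prefactor `exp (-b t)` is
`p ^ (-s)`. When `ε N* ≤ p ^ (-c)` with `c > κ δ`, one can take `s > 1` with `s κ δ ≤ c`: every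
`exp (ε ḡ_i)` is then at most `e`, so the sum over the `p` indices gives `A ≤ 2 e p ^ (1 - s) → 0`.
-/

/-- The `liminf` of a real function that is not eventually bounded below is the junk value `0`;
the condition `0 ≤ c` excludes this case. -/
lemma eventually_lt_of_nonneg_of_lt_liminf {ι : Type*} {l : Filter ι} {f : ι → ℝ} {c : ℝ}
    (hc : 0 ≤ c) (h : c < liminf f l) : ∀ᶠ x in l, c < f x := by
  refine eventually_lt_of_lt_liminf h ?_
  by_contra hbdd
  have hempty : {r | ∀ᶠ x in l, r ≤ f x} = ∅ :=
    Set.eq_empty_of_forall_notMem fun r hr => hbdd ⟨r, hr⟩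
  rw [liminf_eq, hempty, Real.sSup_empty] at h
  exact h.not_ge hc

lemma le_rpow_neg_of_le_neg_log_div_log {x q c : ℝ} (hx : 0 ≤ x) (hq : 1 < q)
    (h : c ≤ -Real.log x / Real.log q) : x ≤ q ^ (-c) := by
  have hq₀ : 0 < q := zero_lt_one.trans hq
  rcases hx.eq_or_lt with rfl | hx
  · positivity
  · rw [le_div_iff₀ (Real.log_pos hq)] at h
    rw [Real.le_rpow_iff_log_le hx hq₀]
    linarith

lemma exists_one_lt_mul_lt {x c : ℝ} (h : x < c) : ∃ s, 1 < s ∧ s * x < c := by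
  have hlim : Tendsto (fun s : ℝ => s * x) (𝓝[>] 1) (𝓝 x) := by
    simpa using ((continuous_mul_const x).tendsto 1).mono_left nhdsWithin_le_nhds
  exact (eventually_mem_nhdsWithin.and (hlim.eventually_lt_const h)).exists

lemma integral_exp_mul_mul_le {π : Measure ℝ} [IsProbabilityMeasure π] {t y M δ : ℝ}
    (hπ : ∀ᵐ u ∂π, |u| ≤ M) (hy : |y| ≤ δ) :
    ∫ u, Real.exp (t * u * y) ∂π ≤ Real.exp (|t| * M * δ) := by
  have hbound : ∀ᵐ u ∂π, ‖Real.exp (t * u * y)‖ ≤ Real.exp (|t| * M * δ) := by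
    filter_upwards [hπ] with u hu
    have hM : 0 ≤ M := (abs_nonneg u).trans hu
    rw [Real.norm_eq_abs, Real.abs_exp, Real.exp_le_exp]
    calc t * u * y ≤ |t| * |u| * |y| := by
          simpa only [abs_mul] using le_abs_self (t * u * y)
      _ ≤ |t| * M * δ := by gcongr
  simpa using (Real.le_norm_self _).trans (norm_integral_le_of_norm_le_const hbound)

section FixedDesign

variable {n p : ℕ} {X : Matrix (Fin n) (Fin p) ℝ} {π : Measure ℝ}

lemma gfun_eq_integral_gram (X : Matrix (Fin n) (Fin p) ℝ) (π : Measure ℝ) (i j : Fin p) (t : ℝ) :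
    gfun X π i j t = (∫ u, Real.exp (t * u * (Xᵀ * X) i j) ∂π) - 1 := by
  simp only [gfun, mul_apply, transpose_apply]

lemma card_gram_ne_zero_le_Nstar (X : Matrix (Fin n) (Fin p) ℝ) (i : Fin p) :
    ((Finset.univ.erase i).filter fun j => (Xᵀ * X) i j ≠ 0).card ≤ Nstar X :=
  Finset.le_sup (f := fun i : Fin p =>
    ((Finset.univ.erase i).filter fun j => (Xᵀ * X) i j ≠ 0).card) (Finset.mem_univ i)

lemma Afun_nonneg (X : Matrix (Fin n) (Fin p) ℝ) (π : Measure ℝ) (b ε : ℝ) :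
    0 ≤ Afun X π b ε := by
  apply Real.sInf_nonneg
  rintro _ ⟨t, -, rfl⟩
  positivity

lemma Afun_le (X : Matrix (Fin n) (Fin p) ℝ) (π : Measure ℝ) (b ε : ℝ) {t : ℝ} (ht : 0 < t) :
    Afun X π b ε ≤ Real.exp (-(b * t)) *
      ∑ i, (Real.exp (ε * gbar X π i t) + Real.exp (ε * gbar X π i (-t))) := by
  refine csInf_le ⟨0, ?_⟩ ⟨t, ht, rfl⟩
  rintro _ ⟨t, -, rfl⟩
  positivity

variable [IsProbabilityMeasure π] {M δ ε : ℝ}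

lemma gfun_eq_zero_of_gram_eq_zero {i j : Fin p} (h : (Xᵀ * X) i j = 0) (t : ℝ) :
    gfun X π i j t = 0 := by
  simp [gfun_eq_integral_gram, h]

lemma gfun_le_exp {i j : Fin p} (hπ : ∀ᵐ u ∂π, |u| ≤ M) (hC : |(Xᵀ * X) i j| ≤ δ) (t : ℝ) :
    gfun X π i j t ≤ Real.exp (|t| * M * δ) - 1 := by
  rw [gfun_eq_integral_gram]
  exact sub_le_sub_right (integral_exp_mul_mul_le hπ hC) 1

lemma gbar_le_Nstar_mul_exp (hπ : ∀ᵐ u ∂π, |u| ≤ M)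
    (hC : ∀ i j, i ≠ j → |(Xᵀ * X) i j| ≤ δ) (i : Fin p) (t : ℝ) :
    gbar X π i t ≤ Nstar X * Real.exp (|t| * M * δ) := by
  calc gbar X π i t
      = ∑ j ∈ (Finset.univ.erase i).filter fun j => (Xᵀ * X) i j ≠ 0, gfun X π i j t :=
        (Finset.sum_filter_of_ne fun j _ => mt (gfun_eq_zero_of_gram_eq_zero · t)).symm
    _ ≤ ((Finset.univ.erase i).filter fun j => (Xᵀ * X) i j ≠ 0).card •
          Real.exp (|t| * M * δ) := by
        refine Finset.sum_le_card_nsmul _ _ _ fun j hj => ?_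
        have hij : i ≠ j := (Finset.ne_of_mem_erase (Finset.mem_filter.1 hj).1).symm
        exact (gfun_le_exp hπ (hC i j hij) t).trans (sub_le_self _ zero_le_one)
    _ ≤ Nstar X * Real.exp (|t| * M * δ) := by
        rw [nsmul_eq_mul]
        gcongr
        exact card_gram_ne_zero_le_Nstar X i

lemma Afun_le_exp_mul_exp_Nstar (hε : 0 ≤ ε) (hπ : ∀ᵐ u ∂π, |u| ≤ M)
    (hC : ∀ i j, i ≠ j → |(Xᵀ * X) i j| ≤ δ) (b : ℝ) {t : ℝ} (ht : 0 < t) :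
    Afun X π b ε ≤
      Real.exp (-(b * t)) * (p * (2 * Real.exp (ε * (Nstar X * Real.exp (t * M * δ))))) := by
  set B := Real.exp (ε * (Nstar X * Real.exp (t * M * δ)))
  have hB {i : Fin p} {r : ℝ} (hr : |r| = t) : Real.exp (ε * gbar X π i r) ≤ B := by
    have hgbar := gbar_le_Nstar_mul_exp hπ hC i r
    rw [hr] at hgbar
    exact Real.exp_le_exp.2 (mul_le_mul_of_nonneg_left hgbar hε)
  have hsum : ∑ i, (Real.exp (ε * gbar X π i t) + Real.exp (ε * gbar X π i (-t)))
      ≤ p * (2 * B) := by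
    have hterm (i : Fin p) :
        Real.exp (ε * gbar X π i t) + Real.exp (ε * gbar X π i (-t)) ≤ 2 * B := by
      rw [two_mul]
      exact add_le_add (hB (abs_of_pos ht)) (hB (by rw [abs_neg, abs_of_pos ht]))
    simpa using Finset.sum_le_card_nsmul Finset.univ _ _ fun i _ => hterm i
  exact (Afun_le X π b ε ht).trans (by gcongr)

lemma Afun_le_two_mul_exp_one_mul_rpow {b κ s : ℝ} (hp : 1 < p) (hε : 0 ≤ ε) (hb : 0 < b)
    (hs : 0 < s) (hN : ε * Nstar X ≤ (p : ℝ) ^ (-(s * (κ * δ)))) (hπ : ∀ᵐ u ∂π, |u| ≤ κ * b)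
    (hC : ∀ i j, i ≠ j → |(Xᵀ * X) i j| ≤ δ) :
    Afun X π b ε ≤ 2 * Real.exp 1 * (p : ℝ) ^ (1 - s) := by
  have hp' : (1 : ℝ) < p := mod_cast hp
  have hp₀ : (0 : ℝ) < p := zero_lt_one.trans hp'
  set t := s * Real.log p / b with ht_def
  have ht : 0 < t := div_pos (mul_pos hs (Real.log_pos hp')) hb
  have hprefactor : Real.exp (-(b * t)) = (p : ℝ) ^ (-s) := by
    rw [Real.rpow_def_of_pos hp₀, ht_def]
    congr 1
    field_simp
  have hgrowth : Real.exp (t * (κ * b) * δ) = (p : ℝ) ^ (s * (κ * δ)) := by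
    rw [Real.rpow_def_of_pos hp₀, ht_def]
    congr 1
    field_simp
  have hexponent : ε * (Nstar X * Real.exp (t * (κ * b) * δ)) ≤ 1 := by
    calc ε * (Nstar X * Real.exp (t * (κ * b) * δ))
        = ε * Nstar X * (p : ℝ) ^ (s * (κ * δ)) := by rw [hgrowth, mul_assoc]
      _ ≤ (p : ℝ) ^ (-(s * (κ * δ))) * (p : ℝ) ^ (s * (κ * δ)) := by gcongr
      _ = 1 := by rw [← Real.rpow_add hp₀, neg_add_cancel, Real.rpow_zero]
  calc Afun X π b ε
      ≤ Real.exp (-(b * t)) *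
          (p * (2 * Real.exp (ε * (Nstar X * Real.exp (t * (κ * b) * δ))))) :=
        Afun_le_exp_mul_exp_Nstar hε hπ hC b ht
    _ ≤ Real.exp (-(b * t)) * (p * (2 * Real.exp 1)) := by gcongr
    _ = 2 * Real.exp 1 * (p : ℝ) ^ (1 - s) := by
        rw [hprefactor, sub_eq_add_neg, Real.rpow_add hp₀, Real.rpow_one]
        ring

end FixedDesign

theorem stmt_8_general {p : ℕ → ℕ} (hp : Tendsto p atTop atTop)
    (X : ∀ n, Matrix (Fin n) (Fin (p n)) ℝ) {ε : ℕ → ℝ} (hε : ∀ n, 0 ≤ ε n)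
    (π : ℕ → Measure ℝ) [∀ n, IsProbabilityMeasure (π n)]
    {c : ℝ} (hN : ∀ᶠ n in atTop, ε n * Nstar (X n) ≤ (p n : ℝ) ^ (-c))
    {b : ℕ → ℝ} (hb : ∀ n, 0 < b n) {κ : ℝ} (hπ : ∀ᶠ n in atTop, ∀ᵐ u ∂(π n), |u| ≤ κ * b n)
    {δ : ℝ} (hC : ∀ n i j, i ≠ j → |((X n)ᵀ * X n) i j| ≤ δ) (hδ : κ * δ < c) :
    Tendsto (fun n => Afun (X n) (π n) (b n) (ε n)) atTop (𝓝 0) := by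
  obtain ⟨s, hs, hsc⟩ := exists_one_lt_mul_lt hδ
  have hlim : Tendsto (fun n => 2 * Real.exp 1 * (p n : ℝ) ^ (1 - s)) atTop (𝓝 0) := by
    simpa using (((tendsto_rpow_neg_atTop (sub_pos.2 hs)).comp
      (tendsto_natCast_atTop_atTop.comp hp)).const_mul (2 * Real.exp 1))
  refine squeeze_zero' (.of_forall fun n => Afun_nonneg _ _ _ _) ?_ hlim
  filter_upwards [hp.eventually_gt_atTop 1, hN, hπ] with n hpn hNn hπn
  have hNs : ε n * Nstar (X n) ≤ (p n : ℝ) ^ (-(s * (κ * δ))) :=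
    hNn.trans (Real.rpow_le_rpow_of_exponent_le (mod_cast hpn.le) (neg_le_neg hsc.le))
  exact Afun_le_two_mul_exp_one_mul_rpow hpn (hε n) (hb n) (zero_lt_one.trans hs) hNs hπn (hC n)

lemma eventually_mul_Nstar_le_rpow_neg {p : ℕ → ℕ} (hp : Tendsto p atTop atTop)
    (X : ∀ n, Matrix (Fin n) (Fin (p n)) ℝ) {ε : ℕ → ℝ} (hε : ∀ n, 0 ≤ ε n) {c : ℝ} (hc : 0 ≤ c)
    (h : c < liminf (fun n => -Real.log (ε n * Nstar (X n)) / Real.log (p n)) atTop) :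
    ∀ᶠ n in atTop, ε n * Nstar (X n) ≤ (p n : ℝ) ^ (-c) := by
  filter_upwards [eventually_lt_of_nonneg_of_lt_liminf hc h, hp.eventually_gt_atTop 1]
    with n hn hpn
  exact le_rpow_neg_of_le_neg_log_div_log (mul_nonneg (hε n) (Nat.cast_nonneg _))
    (mod_cast hpn) hn.le

/-- Corollary 2 of the paper, the sparse case. If
`liminf [−log(ε_n N*_n(C)) / log p⁽ⁿ⁾] ≥ c₃ > 0`, the support of `π_n` is eventually
contained in `[−c₄ a_n, −a_n] ∪ [a_n, c₄ a_n]`, and `max_{i≠j} |C_ij| ≤ δ < c₃/(2c₄)`, then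
Condition F'' holds: `A_n(a_n/2, ε_n, ḡ⁽ⁿ⁾) → 0`. -/
theorem stmt_8 (p : ℕ → ℕ) (hp : Tendsto p atTop atTop)
    (X : ∀ n, Matrix (Fin n) (Fin (p n)) ℝ)
    (hcols : ∀ n j, ∑ i, (X n i j) ^ 2 = 1)
    (ε : ℕ → ℝ) (hε : ∀ n, ε n ∈ Set.Ioo (0 : ℝ) 1)
    (π : ℕ → Measure ℝ) (hπ : ∀ n, IsProbabilityMeasure (π n))
    (c₃ : ℝ) (hc₃ : 0 < c₃)
    (hliminf : c₃ ≤ Filter.liminf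
      (fun n => -Real.log (ε n * (Nstar (X n) : ℝ)) / Real.log (p n)) atTop)
    (a : ℕ → ℝ) (ha : ∀ n, 0 < a n) (c₄ : ℝ) (hc₄ : 1 ≤ c₄)
    (hsupp : ∀ᶠ n in atTop, ∀ᵐ u ∂(π n), a n ≤ |u| ∧ |u| ≤ c₄ * a n)
    (δ : ℝ) (hδ : 0 < δ)
    (hmax : ∀ n i j, i ≠ j → |((X n)ᵀ * X n) i j| ≤ δ)
    (hδc : δ < c₃ / (2 * c₄)) :
    Tendsto (fun n => Afun (X n) (π n) (a n / 2) (ε n)) atTop (𝓝 0) := by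
  have hc₄_pos : 0 < 2 * c₄ := by linarith
  obtain ⟨c, hδc', hcc₃⟩ := exists_between ((lt_div_iff₀' hc₄_pos).1 hδc)
  have hε₀ (n : ℕ) : 0 ≤ ε n := (hε n).1.le
  have hN := eventually_mul_Nstar_le_rpow_neg hp X hε₀
    ((mul_pos hc₄_pos hδ).trans hδc').le (hcc₃.trans_le hliminf)
  have hbound : ∀ᶠ n in atTop, ∀ᵐ u ∂(π n), |u| ≤ 2 * c₄ * (a n / 2) :=
    hsupp.mono fun n hn => hn.mono fun u hu => hu.2.trans_eq (by ring)
  exact stmt_8_general hp X hε₀ π hN (fun n => half_pos (ha n)) hbound hmax hδc'
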